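/- A Peano continuum X is a dendrite (contains no homeomorphic copy of the circle S¹) if and only if X is hereditarily unicoherent, i.e., for every subcontinuum Z ⊆ X and every two subcontinua Y₁, Y₂ ⊆ Z with Z = Y₁ ∪ Y₂, the intersection Y₁ ∩ Y₂ is connected. -/

import Mathlib

open Set

/-- Two points are linked if they lie in a connected set of diameter at most `ε`. -/
def Linked {X : Type} [MetricSpace X] (ε : ℝ) (x y : X) : Prop :=
  ∃ C : Set X, IsPreconnected C ∧ x ∈ C ∧ y ∈ C ∧ ∀ u ∈ C, ∀ v ∈ C, dist u v ≤ ε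

lemma Linked.symm {X : Type} [MetricSpace X] {ε : ℝ} {x y : X} (h : Linked ε x y) :
    Linked ε y x := by
  obtain ⟨C, h1, h2, h3, h4⟩ := h
  exact ⟨C, h1, h3, h2, h4⟩

lemma Linked.rfl' {X : Type} [MetricSpace X] {ε : ℝ} (hε : 0 ≤ ε) (x : X) : Linked ε x x :=
  ⟨{x}, isPreconnected_singleton, rfl, rfl, by rintro u rfl v rfl; simpa⟩

lemma Linked.dist_le {X : Type} [MetricSpace X] {ε : ℝ} {x y : X} (h : Linked ε x y) :
    dist x y ≤ ε := by
  obtain ⟨C, h1, h2, h3, h4⟩ := h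
  exact h4 _ h2 _ h3

lemma linked_nhds {X : Type} [MetricSpace X] [LocallyConnectedSpace X] {ε : ℝ} (hε : 0 < ε)
    (x : X) : ∀ᶠ y in nhds x, Linked ε x y := by
  have hb : Metric.ball x (ε / 2) ∈ nhds x := Metric.ball_mem_nhds x (by positivity)
  filter_upwards [connectedComponentIn_mem_nhds hb] with y hy
  refine ⟨_, isPreconnected_connectedComponentIn,
    mem_connectedComponentIn (Metric.mem_ball_self (by positivity)), hy, ?_⟩
  intro u hu v hv
  have h1 := connectedComponentIn_subset _ _ hu
  have h2 := connectedComponentIn_subset _ _ hv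
  rw [Metric.mem_ball] at h1 h2
  have := dist_triangle_right u v x
  linarith

lemma chain_exists {X : Type} [MetricSpace X] [LocallyConnectedSpace X] {η : ℝ} (hη : 0 < η)
    {C : Set X} (hC : IsPreconnected C) {x y : X} (hx : x ∈ C) (hy : y ∈ C) :
    ∃ N₀ : ℕ, ∀ N ≥ N₀, ∃ c : ℕ → X, c 0 = x ∧ c N = y ∧
      ∀ j, c j ∈ C ∧ Linked η (c j) (c (j + 1)) := by
  refine hC.induction₂ (fun x y => ∃ N₀ : ℕ, ∀ N ≥ N₀, ∃ c : ℕ → X, c 0 = x ∧ c N = y ∧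
      ∀ j, c j ∈ C ∧ Linked η (c j) (c (j + 1))) ?_ ?_ ?_ hx hy
  · intro x hx
    filter_upwards [nhdsWithin_le_nhds (linked_nhds hη x), self_mem_nhdsWithin] with y hy hyC
    refine ⟨1, fun N hN => ⟨fun j => if j = 0 then x else y, by simp, ?_, ?_⟩⟩
    · have : N ≠ 0 := by omega
      simp [this]
    · intro j
      by_cases hj : j = 0
      · simp [hj, hx, hy]
      · simp [hj, hyC, Linked.rfl' hη.le]
  · rintro x y z hx hy hz ⟨N₁, h1⟩ ⟨N₂, h2⟩
    refine ⟨N₁ + N₂, fun N hN => ?_⟩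
    obtain ⟨c, c0, c1, c2⟩ := h1 N₁ le_rfl
    obtain ⟨d, d0, d1, d2⟩ := h2 (N - N₁) (by omega)
    refine ⟨fun j => if j < N₁ then c j else d (j - N₁), ?_, ?_, ?_⟩
    · by_cases h : 0 < N₁
      · simp [h, c0]
      · have : N₁ = 0 := by omega
        subst this
        simp [d0, ← c1, c0]
    · have : ¬ N < N₁ := by omega
      simp [this, d1]
    · intro j
      by_cases h : j < N₁
      · by_cases h' : j + 1 < N₁
        · simp [h, h', c2]
        · have e : j + 1 = N₁ := by omega
          have := c2 j
          rw [e, c1, ← d0] at this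
          simpa [h, e] using this
      · have h' : ¬ j + 1 < N₁ := by omega
        have e : j + 1 - N₁ = (j - N₁) + 1 := by omega
        simp only [h, h', if_false, e]
        exact d2 _
  · rintro x y hx hy ⟨N₁, h1⟩
    refine ⟨N₁, fun N hN => ?_⟩
    obtain ⟨c, c0, c1, c2⟩ := h1 N hN
    refine ⟨fun j => c (N - j), by simpa, by simpa, fun j => ⟨(c2 _).1, ?_⟩⟩
    by_cases h : j < N
    · have e : N - j = (N - (j + 1)) + 1 := by omega
      change Linked η (c (N - j)) (c (N - (j + 1)))
      rw [e]
      exact (c2 _).2.symm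
    · have e : N - j = N - (j + 1) := by omega
      change Linked η (c (N - j)) (c (N - (j + 1)))
      rw [e]
      exact Linked.rfl' hη.le _

lemma refine_step {X : Type} [MetricSpace X] [LocallyConnectedSpace X] {ε η : ℝ} (hε : 0 < ε)
    (hη : 0 < η) {x y : X} {M : ℕ} {p : ℕ → X} (h0 : p 0 = x) (hM : ∀ k ≥ M, p k = y)
    (hp : ∀ i, Linked ε (p i) (p (i + 1))) :
    ∃ (N : ℕ) (p' : ℕ → X), 1 ≤ N ∧ p' 0 = x ∧ (∀ k ≥ M * N, p' k = y) ∧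
      (∀ i, Linked η (p' i) (p' (i + 1))) ∧ ∀ k, dist (p (k / N)) (p' k) ≤ ε := by
  have key : ∀ i, ∃ N₀ : ℕ, ∀ N ≥ N₀, ∃ c : ℕ → X, c 0 = p i ∧ c N = p (i + 1) ∧
      ∀ j, dist (p i) (c j) ≤ ε ∧ Linked η (c j) (c (j + 1)) := by
    intro i
    obtain ⟨C, h1, h2, h3, h4⟩ := hp i
    obtain ⟨N₀, hN⟩ := chain_exists hη h1 h2 h3
    refine ⟨N₀, fun N hN' => ?_⟩
    obtain ⟨c, c0, c1, c2⟩ := hN N hN'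
    exact ⟨c, c0, c1, fun j => ⟨h4 _ h2 _ (c2 j).1, (c2 j).2⟩⟩
  choose N₀ hN₀ using key
  set N := (∑ i ∈ Finset.range M, N₀ i) + 1 with hN
  have key2 : ∀ i, ∃ c : ℕ → X, c 0 = p i ∧ c N = p (i + 1) ∧ (M ≤ i → ∀ j, c j = y) ∧
      ∀ j, dist (p i) (c j) ≤ ε ∧ Linked η (c j) (c (j + 1)) := by
    intro i
    by_cases hi : i < M
    · have : N₀ i ≤ N := by
        have := Finset.single_le_sum (f := N₀) (fun _ _ => Nat.zero_le _) (Finset.mem_range.2 hi)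
        omega
      obtain ⟨c, c0, c1, c2⟩ := hN₀ i N this
      exact ⟨c, c0, c1, fun h => by omega, c2⟩
    · refine ⟨fun _ => y, (hM _ (by omega)).symm, (hM _ (by omega)).symm, fun _ _ => rfl,
        fun j => ⟨?_, Linked.rfl' hη.le _⟩⟩
      rw [hM i (by omega)]
      simpa using hε.le
  choose c c0 c1 cM c2 using key2
  have hNpos : 0 < N := by omega
  refine ⟨N, fun k => c (k / N) (k % N), hNpos, by simp [c0, h0], ?_, ?_, fun k => (c2 _ _).1⟩
  · intro k hk
    exact cM _ ((Nat.le_div_iff_mul_le hNpos).2 hk) _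
  · intro k
    have e := Nat.div_add_mod k N
    have hlt := Nat.mod_lt k hNpos
    by_cases h : k % N + 1 < N
    · have e1 : (k + 1) / N = k / N := by
        have e' : k + 1 = (k % N + 1) + N * (k / N) := by omega
        rw [e', Nat.add_mul_div_left _ _ hNpos, Nat.div_eq_of_lt h, zero_add]
      have e2 : (k + 1) % N = k % N + 1 := by
        rw [Nat.add_mod_of_add_mod_lt, Nat.mod_eq_of_lt (by omega : 1 < N)]
        rwa [Nat.mod_eq_of_lt (by omega : 1 < N)]
      simp only [e1, e2]
      exact (c2 _ _).2
    · have e0 : k % N + 1 = N := by omega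
      have e3 : k + 1 = N * (k / N + 1) := by rw [mul_add]; omega
      have e1 : (k + 1) / N = k / N + 1 := by rw [e3, Nat.mul_div_cancel_left _ hNpos]
      have e2 : (k + 1) % N = 0 := by rw [e3]; simp
      simp only [e1, e2, c0]
      have := (c2 (k / N) (k % N)).2
      rwa [e0, c1] at this

lemma exists_path_of_linked {X : Type} [MetricSpace X] [CompactSpace X] [LocallyConnectedSpace X]
    {ε : ℝ} (hε : 0 < ε) {x y : X} (hxy : Linked ε x y) :
    ∃ f : ℝ → X, Continuous f ∧ f 0 = x ∧ f 1 = y ∧ ∀ t, dist x (f t) ≤ 3 * ε := by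
  let P : ℕ → ℕ × (ℕ → X) → Prop := fun n s => 1 ≤ s.1 ∧ s.2 0 = x ∧ (∀ k ≥ s.1, s.2 k = y) ∧
    ∀ i, Linked (ε / 2 ^ n) (s.2 i) (s.2 (i + 1))
  have step : ∀ n (s : {s // P n s}), ∃ s' : {s // P (n + 1) s}, ∃ N : ℕ, 1 ≤ N ∧
      s'.1.1 = s.1.1 * N ∧ ∀ k, dist (s.1.2 (k / N)) (s'.1.2 k) ≤ ε / 2 ^ n := by
    rintro n ⟨⟨M, p⟩, hM, h0, h1, h2⟩
    obtain ⟨N, p', hN, a, b, c, d⟩ := refine_step (η := ε / 2 ^ (n + 1)) (by positivity)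
      (by positivity) h0 h1 h2
    exact ⟨⟨⟨M * N, p'⟩, Nat.mul_pos hM hN, a, b, c⟩, N, hN, rfl, d⟩
  choose nxt hnxt using step
  have hinit : P 0 (1, fun k => if k = 0 then x else y) := by
    refine ⟨le_rfl, by simp, ?_, ?_⟩
    · intro k hk
      have : k ≠ 0 := by simp at hk; omega
      simp [this]
    · intro i
      by_cases h : i = 0
      · simp [h, hxy]
      · simp [h, Linked.rfl' hε.le]
  let S : ∀ n, {s // P n s} := fun n => Nat.rec ⟨_, hinit⟩ nxt n
  let F : ℕ → ℝ → X := fun n t => (S n).1.2 ⌊t * (S n).1.1⌋₊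
  have hF : ∀ t n, dist (F n t) (F (n + 1) t) ≤ (2 * ε) / 2 / 2 ^ n := by
    intro t n
    obtain ⟨N, hN, e, hd⟩ := hnxt n (S n)
    have e' : (S (n + 1)).1.1 = (S n).1.1 * N := e
    have := hd ⌊t * (S (n + 1)).1.1⌋₊
    rw [← Nat.floor_div_natCast, e'] at this
    have hN' : (N : ℝ) ≠ 0 := by positivity
    have e2 : t * ((S n).1.1 * N : ℕ) / (N : ℝ) = t * (S n).1.1 := by
      push_cast; field_simp
    rw [e2] at this
    simp only [F]
    rw [e']
    calc _ ≤ ε / 2 ^ n := this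
      _ = _ := by ring
  have hlim : ∀ t, ∃ a, Filter.Tendsto (fun n => F n t) Filter.atTop (nhds a) := fun t =>
    cauchySeq_tendsto_of_complete (cauchySeq_of_le_geometric_two (hF t))
  choose f hf using hlim
  have hdist : ∀ t n, dist (F n t) (f t) ≤ 2 * ε / 2 ^ n := fun t n =>
    dist_le_of_le_geometric_two_of_tendsto (hF t) (hf t) n
  refine ⟨f, ?_, ?_, ?_, ?_⟩
  · have hfl : ∀ a b : ℝ, a ≤ b → b < a + 1 → ⌊b⌋₊ = ⌊a⌋₊ ∨ ⌊b⌋₊ = ⌊a⌋₊ + 1 := by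
      intro a b h1 h2
      have h3 := Nat.floor_mono h1
      have h4 : ⌊b⌋₊ < ⌊a⌋₊ + 2 := by
        rw [Nat.floor_lt' (by omega)]
        have := Nat.lt_floor_add_one a
        push_cast
        linarith
      omega
    have hclose : ∀ (n : ℕ) (s t : ℝ), s ≤ t → t < s + 1 / (S n).1.1 → dist (F n s) (F n t) ≤ ε / 2 ^ n := by
      intro n s t h1 h2
      obtain ⟨hM, h0, hk, hl⟩ := (S n).2
      have hM' : (0 : ℝ) < (S n).1.1 := by exact_mod_cast hM
      have a1 : s * (S n).1.1 ≤ t * (S n).1.1 := by gcongr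
      have a2 : t * (S n).1.1 < s * (S n).1.1 + 1 := by
        have := mul_lt_mul_of_pos_right h2 hM'
        rw [add_mul, one_div, inv_mul_cancel₀ hM'.ne'] at this
        exact this
      simp only [F]
      rcases hfl _ _ a1 a2 with h | h
      · rw [h]; simp; positivity
      · rw [h]; exact (hl _).dist_le
    rw [Metric.continuous_iff]
    intro t e he
    obtain ⟨n, hn⟩ : ∃ n : ℕ, 5 * ε / 2 ^ n < e := by
      have : Filter.Tendsto (fun n : ℕ => 5 * ε * (1 / 2 : ℝ) ^ n) Filter.atTop
          (nhds (5 * ε * 0)) :=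
        (tendsto_pow_atTop_nhds_zero_of_lt_one (by norm_num) (by norm_num)).const_mul _
      rw [mul_zero] at this
      obtain ⟨n, hn⟩ := (this.eventually (gt_mem_nhds he)).exists
      refine ⟨n, ?_⟩
      simpa [div_eq_mul_inv] using hn
    have hM' : (0 : ℝ) < (S n).1.1 := by exact_mod_cast (S n).2.1
    refine ⟨1 / (S n).1.1, by positivity, fun s hs => ?_⟩
    have hst : dist (F n s) (F n t) ≤ ε / 2 ^ n := by
      rw [Real.dist_eq, abs_lt] at hs
      rcases le_total s t with h | h
      · exact hclose n s t h (by linarith)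
      · rw [dist_comm]; exact hclose n t s h (by linarith)
    have h1 := hdist s n
    have h2 := hdist t n
    rw [dist_comm] at h1
    have h3 := dist_triangle4 (f s) (F n s) (F n t) (f t)
    have : 5 * ε / 2 ^ n = 2 * ε / 2 ^ n + ε / 2 ^ n + 2 * ε / 2 ^ n := by ring
    linarith
  · refine tendsto_nhds_unique (hf 0) ?_
    have : ∀ n, F n 0 = x := fun n => by simpa [F] using (S n).2.2.1
    simp [this]
  · refine tendsto_nhds_unique (hf 1) ?_
    have : ∀ n, F n 1 = y := fun n => by simpa [F] using (S n).2.2.2.1 _ le_rfl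
    simp [this]
  · intro t
    have h1 := hdist t 0
    have h2 : dist x (F 0 t) ≤ ε := by
      change dist x (if _ = 0 then x else y) ≤ ε
      split_ifs
      · simpa using hε.le
      · exact hxy.dist_le
    have h3 := dist_triangle x (F 0 t) (f t)
    simp at h1
    linarith

lemma locPathConn {X : Type} [MetricSpace X] [CompactSpace X] [LocallyConnectedSpace X] :
    LocallyPathConnectedSpace X := by
  refine LocallyPathConnectedSpace.of_bases (ι := ℝ) (p := fun _ r => 0 < r)
    (s := fun x r => pathComponentIn (Metric.ball x r) x) ?_ ?_
  · intro x
    refine (Metric.nhds_basis_ball (x := x)).to_hasBasis' ?_ ?_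
    · intro r hr
      exact ⟨r, hr, pathComponentIn_subset⟩
    · intro r hr
      filter_upwards [linked_nhds (by positivity : 0 < r / 6) x] with y hy
      obtain ⟨f, hf, f0, f1, hd⟩ := exists_path_of_linked (by positivity) hy
      refine ⟨⟨⟨fun t => f t, by fun_prop⟩, by simpa, by simpa⟩, fun t => ?_⟩
      have := hd t
      simp only [Metric.mem_ball, dist_comm _ x]
      change dist x (f t) < r
      linarith
  · intro x r hr
    exact isPathConnected_pathComponentIn (Metric.mem_ball_self hr)


/-- Closed subsets of the unit interval all of whose gaps are collapsed by `f`. -/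
def GapSet {X : Type} (f : ℝ → X) : Set (Set ℝ) :=
  {K | K ⊆ Icc 0 1 ∧ IsClosed K ∧ (0 : ℝ) ∈ K ∧ (1 : ℝ) ∈ K ∧
    ∀ a ∈ K, ∀ b ∈ K, a < b → (∀ u ∈ Ioo a b, u ∉ K) → f a = f b}

lemma gapSet_minimal {X : Type} [MetricSpace X] {f : ℝ → X} (hf : Continuous f) :
    ∃ K, Minimal (· ∈ GapSet f) K := by
  have hI : Icc (0 : ℝ) 1 ∈ GapSet f := by
    refine ⟨le_rfl, isClosed_Icc, by simp, by simp, ?_⟩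
    intro a ha b hb hab h
    exfalso
    refine h ((a + b) / 2) ⟨by linarith, by linarith⟩ ⟨?_, ?_⟩
    · linarith [ha.1, hb.1]
    · linarith [ha.2, hb.2]
  suffices H : ∀ c ⊆ GapSet f, IsChain (· ⊆ ·) c → c.Nonempty →
      ∃ lb ∈ GapSet f, ∀ s ∈ c, lb ⊆ s by
    obtain ⟨K, -, hK⟩ := zorn_superset_nonempty (GapSet f) H _ hI
    exact ⟨K, hK⟩
  intro c hc hchain hne
  refine ⟨⋂₀ c, ⟨?_, ?_, ?_, ?_, ?_⟩, fun s hs => sInter_subset_of_mem hs⟩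
  · obtain ⟨s, hs⟩ := hne
    exact (sInter_subset_of_mem hs).trans (hc hs).1
  · exact isClosed_sInter fun s hs => (hc hs).2.1
  · exact fun s hs => (hc hs).2.2.1
  · exact fun s hs => (hc hs).2.2.2.1
  intro a ha b hb hab hgap
  by_contra hne'
  have hev : ∀ᶠ q : ℝ × ℝ in nhds (a, b), f q.1 ≠ f q.2 := by
    have h1 : Continuous fun q : ℝ × ℝ => f q.1 := by fun_prop
    have h2 : Continuous fun q : ℝ × ℝ => f q.2 := by fun_prop
    exact (isOpen_ne_fun h1 h2).mem_nhds hne'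
  obtain ⟨ε, hε, hball⟩ := Metric.eventually_nhds_iff.1 hev
  set δ := min (ε / 2) ((b - a) / 3) with hδ
  have hδ0 : 0 < δ := lt_min (by positivity) (by linarith)
  have hδ1 : δ ≤ ε / 2 := min_le_left _ _
  have hδ2 : δ ≤ (b - a) / 3 := min_le_right _ _
  have : Nonempty c := hne.to_subtype
  obtain ⟨⟨s, hs⟩, hsub⟩ := exists_subset_nhds_of_isCompact (V := fun i : c => (i : Set ℝ))
    (U := (Icc (a + δ) (b - δ))ᶜ)
    (by
      intro i j
      rcases hchain.total i.2 j.2 with h | h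
      · exact ⟨i, le_rfl, h⟩
      · exact ⟨j, h, le_rfl⟩)
    (fun i => isCompact_Icc.of_isClosed_subset (hc i.2).2.1 (hc i.2).1)
    (by
      intro x hx
      refine isClosed_Icc.isOpen_compl.mem_nhds ?_
      intro hx'
      refine hgap x ⟨by linarith [hx'.1], by linarith [hx'.2]⟩ ?_
      rwa [sInter_eq_iInter])
  simp only at hsub
  obtain ⟨hs01, hscl, hs0, hs1, hsg⟩ := hc hs
  obtain ⟨a', ha', hamax⟩ := ((isCompact_Icc (a := a) (b := a + δ)).inter_left hscl).exists_isGreatest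
    ⟨a, ha s hs, by simp [hδ0.le]⟩
  obtain ⟨b', hb', hbmin⟩ := ((isCompact_Icc (a := b - δ) (b := b)).inter_left hscl).exists_isLeast
    ⟨b, hb s hs, by simp [hδ0.le]⟩
  obtain ⟨ha'1, ha'2, ha'3⟩ := ha'
  obtain ⟨hb'1, hb'2, hb'3⟩ := hb'
  refine hball (y := (a', b')) ?_ (hsg a' ha'1 b' hb'1 (by linarith) ?_)
  · rw [Prod.dist_eq, max_lt_iff, Real.dist_eq, Real.dist_eq, abs_lt, abs_lt]
    simp only
    refine ⟨⟨by linarith, by linarith⟩, ⟨by linarith, by linarith⟩⟩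
  · intro u hu hus
    have h1 := hsub hus
    simp only [mem_compl_iff, mem_Icc, not_and_or, not_le] at h1
    rcases h1 with h1 | h1
    · have := hamax ⟨hus, by linarith [hu.1], h1.le⟩
      linarith [hu.1]
    · have := hbmin ⟨hus, h1.le, by linarith [hu.2]⟩
      linarith [hu.2]

lemma exists_monotone_path {X : Type} [MetricSpace X] {f : ℝ → X} (hf : Continuous f) :
    ∃ g : ℝ → X, ContinuousOn g (Icc 0 1) ∧ g 0 = f 0 ∧ g 1 = f 1 ∧
      (∀ t ∈ Icc (0 : ℝ) 1, ∃ s ∈ Icc (0 : ℝ) 1, g t = f s) ∧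
      ∀ s ∈ Icc (0 : ℝ) 1, ∀ t ∈ Icc (0 : ℝ) 1, ∀ u ∈ Icc s t, g s = g t → g u = g s := by
  obtain ⟨K, hK⟩ := gapSet_minimal hf
  obtain ⟨⟨hK01, hKcl, hK0, hK1, hKg⟩, hmin⟩ := hK
  have hKm : ∀ s ∈ K, ∀ t ∈ K, s < t → f s = f t → ∀ u ∈ Ioo s t, u ∉ K := by
    intro s hs t ht hst hfst u hu huK
    have hmem : K \ Ioo s t ∈ GapSet f := by
      refine ⟨sdiff_subset.trans hK01, hKcl.sdiff isOpen_Ioo, ⟨hK0, ?_⟩, ⟨hK1, ?_⟩, ?_⟩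
      · intro h; linarith [(hK01 hs).1, h.1]
      · intro h; linarith [(hK01 ht).2, h.2]
      · rintro a ⟨ha, ha'⟩ b ⟨hb, hb'⟩ hab hgap
        simp only [mem_Ioo, not_and_or, not_lt] at ha' hb'
        by_cases h : a ≤ s ∧ t ≤ b
        · have e1 : a = s := by
            by_contra hne
            have : a < s := lt_of_le_of_ne h.1 hne
            exact hgap s ⟨this, by linarith⟩ ⟨hs, by simp⟩
          have e2 : b = t := by
            by_contra hne
            have : t < b := lt_of_le_of_ne h.2 (Ne.symm hne)
            exact hgap t ⟨by linarith, this⟩ ⟨ht, by simp⟩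
          rw [e1, e2, hfst]
        · refine hKg a ha b hb hab fun v hv hvK => hgap v hv ⟨hvK, ?_⟩
          rintro ⟨h1, h2⟩
          apply h
          constructor
          · rcases ha' with h' | h'
            · exact h'
            · linarith [hv.1]
          · rcases hb' with h' | h'
            · linarith [hv.2]
            · exact h'
    have := hmin hmem sdiff_subset huK
    exact this.2 hu
  have hl : ∀ x, ∃ l, x ∈ Icc (0 : ℝ) 1 → IsGreatest (K ∩ Iic x) l := by
    intro x
    by_cases hx : x ∈ Icc (0 : ℝ) 1
    · have hc : IsCompact (K ∩ Iic x) :=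
        isCompact_Icc.of_isClosed_subset (hKcl.inter isClosed_Iic) (inter_subset_left.trans hK01)
      obtain ⟨l, h⟩ := hc.exists_isGreatest ⟨0, hK0, hx.1⟩
      exact ⟨l, fun _ => h⟩
    · exact ⟨0, fun h => absurd h hx⟩
  have hr : ∀ x, x ∈ Icc (0 : ℝ) 1 → ∃ l, IsLeast (K ∩ Ici x) l := by
    intro x hx
    have hc : IsCompact (K ∩ Ici x) :=
      isCompact_Icc.of_isClosed_subset (hKcl.inter isClosed_Ici) (inter_subset_left.trans hK01)
    exact hc.exists_isLeast ⟨1, hK1, hx.2⟩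
  choose l hl using hl
  have hlK : ∀ x ∈ K, l x = x := fun x hx =>
    le_antisymm (hl x (hK01 hx)).1.2 ((hl x (hK01 hx)).2 ⟨hx, le_refl x⟩)
  have hlr : ∀ x ∈ Icc (0 : ℝ) 1, ∀ r, IsLeast (K ∩ Ici x) r → f (l x) = f r := by
    intro x hx r hr
    obtain ⟨⟨h1, h2⟩, h3⟩ := hl x hx
    obtain ⟨⟨h4, h5⟩, h6⟩ := hr
    simp only [mem_Iic, mem_Ici] at h2 h5
    rcases eq_or_lt_of_le (h2.trans h5) with h | h
    · rw [h]
    · refine hKg _ h1 _ h4 h fun u hu huK => ?_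
      rcases le_total u x with h' | h'
      · exact absurd (h3 ⟨huK, h'⟩) (not_le.2 hu.1)
      · exact absurd (h6 ⟨huK, h'⟩) (not_le.2 hu.2)
  refine ⟨fun x => f (l x), ?_, ?_, ?_, ?_, ?_⟩
  · intro x hx
    by_cases hxK : x ∈ K
    · rw [Metric.continuousWithinAt_iff]
      intro e he
      obtain ⟨δ, hδ, h⟩ := Metric.continuous_iff.1 hf x e he
      refine ⟨δ, hδ, fun {y} hy hyx => ?_⟩
      simp only [hlK x hxK]
      rw [Real.dist_eq, abs_lt] at hyx
      rcases le_total x y with hxy | hxy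
      · obtain ⟨⟨h1, h2⟩, h3⟩ := hl y hy
        have := h3 ⟨hxK, hxy⟩
        simp only [mem_Iic] at h2
        apply h
        rw [Real.dist_eq, abs_lt]
        constructor <;> linarith
      · obtain ⟨r, hr⟩ := hr y hy
        rw [hlr y hy r hr]
        obtain ⟨⟨h1, h2⟩, h3⟩ := hr
        have := h3 ⟨hxK, hxy⟩
        simp only [mem_Ici] at h2
        apply h
        rw [Real.dist_eq, abs_lt]
        constructor <;> linarith
    · suffices H : (fun x => f (l x)) =ᶠ[nhdsWithin x (Icc 0 1)] fun _ => f (l x) from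
        continuousWithinAt_const.congr_of_eventuallyEq H rfl
      obtain ⟨r, ⟨h4, h5⟩, h6⟩ := hr x hx
      obtain ⟨⟨h1, h2⟩, h3⟩ := hl x hx
      simp only [mem_Iic, mem_Ici] at h2 h5
      have h2' : l x < x := lt_of_le_of_ne h2 (fun h => hxK (h ▸ h1))
      have h5' : x < r := lt_of_le_of_ne h5 (fun h => hxK (h ▸ h4))
      filter_upwards [nhdsWithin_le_nhds (Ioo_mem_nhds h2' h5'), self_mem_nhdsWithin] with y hy hyI
      obtain ⟨⟨g1, g2⟩, g3⟩ := hl y hyI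
      simp only [mem_Iic] at g2
      have : l y = l x := by
        apply le_antisymm _ (g3 ⟨h1, hy.1.le⟩)
        rcases le_total (l y) x with h | h
        · exact h3 ⟨g1, h⟩
        · have := h6 ⟨g1, h⟩
          linarith [hy.2]
      simp only [this]
  · simp only [hlK 0 hK0]
  · simp only [hlK 1 hK1]
  · exact fun t ht => ⟨l t, hK01 (hl t ht).1.1, rfl⟩
  · intro s hs t ht u hu hst
    have hu' : u ∈ Icc (0 : ℝ) 1 := ⟨hs.1.trans hu.1, hu.2.trans ht.2⟩
    obtain ⟨⟨s1, s2⟩, s3⟩ := hl s hs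
    obtain ⟨⟨t1, t2⟩, t3⟩ := hl t ht
    obtain ⟨⟨u1, u2⟩, u3⟩ := hl u hu'
    simp only [mem_Iic] at s2 t2 u2
    have a1 : l s ≤ l u := u3 ⟨s1, s2.trans hu.1⟩
    have a2 : l u ≤ l t := t3 ⟨u1, u2.trans hu.2⟩
    simp only at hst ⊢
    rcases eq_or_lt_of_le a1 with h | h
    · rw [h]
    rcases eq_or_lt_of_le a2 with h' | h'
    · rw [h', hst]
    have hmem : l u ∈ Ioo (l s) (l t) := ⟨h, h'⟩
    exact absurd u1 (hKm _ s1 _ t1 (h.trans h') hst _ hmem)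

/-- Running supremum of the distance from `g r`. -/
noncomputable def runSup {X : Type} [MetricSpace X] (g : ℝ → X) (r t : ℝ) : ℝ :=
  sSup ((fun θ : ℝ => dist (g (r + θ * max (t - r) 0)) (g r)) '' Icc 0 1)

lemma runSup_continuous {X : Type} [MetricSpace X] {g : ℝ → X} (hg : Continuous g) :
    Continuous fun q : ℝ × ℝ => runSup g q.2 q.1 := by
  unfold runSup
  refine IsCompact.continuous_sSup (γ := ℝ × ℝ)
    (f := fun q θ => dist (g (q.2 + θ * max (q.1 - q.2) 0)) (g q.2)) isCompact_Icc ?_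
  simp only [Function.HasUncurry.uncurry, id]
  fun_prop

lemma le_runSup {X : Type} [MetricSpace X] {g : ℝ → X} (hg : Continuous g) {r u t : ℝ}
    (h1 : r ≤ u) (h2 : u ≤ t) : dist (g u) (g r) ≤ runSup g r t := by
  refine le_csSup ?_ ?_
  · refine (isCompact_Icc.image ?_).bddAbove
    fun_prop
  · rcases eq_or_lt_of_le (h1.trans h2) with h | h
    · have : u = r := by linarith
      exact ⟨0, by simp, by simp [this]⟩
    · have hp : 0 < t - r := by linarith
      refine ⟨(u - r) / (t - r), ⟨by apply div_nonneg <;> linarith, ?_⟩, ?_⟩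
      · rw [div_le_one hp]; linarith
      · simp only [max_eq_left hp.le]
        rw [div_mul_cancel₀ _ hp.ne', add_sub_cancel]

lemma runSup_le {X : Type} [MetricSpace X] {g : ℝ → X} {r t c : ℝ} (hc : 0 ≤ c)
    (h : ∀ u, r ≤ u → u ≤ t → dist (g u) (g r) ≤ c) : runSup g r t ≤ c := by
  refine csSup_le ((nonempty_Icc.2 zero_le_one).image _) ?_
  rintro _ ⟨θ, hθ, rfl⟩
  simp only
  rcases le_total t r with htr | htr
  · rw [max_eq_right (by linarith)]
    simpa
  · rw [max_eq_left (by linarith)]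
    refine h _ ?_ ?_
    · nlinarith [hθ.1]
    · nlinarith [hθ.2]

lemma runSup_nonneg {X : Type} [MetricSpace X] {g : ℝ → X} (r t : ℝ) : 0 ≤ runSup g r t := by
  refine Real.sSup_nonneg ?_
  rintro _ ⟨θ, hθ, rfl⟩
  exact dist_nonneg

/-- An injective arc from `x` to `y` inside `U`. -/
def ArcIn {X : Type} [MetricSpace X] (U : Set X) (x y : X) (a b : ℝ) (φ : ℝ → X) : Prop :=
  a < b ∧ ContinuousOn φ (Icc a b) ∧ InjOn φ (Icc a b) ∧ φ a = x ∧ φ b = y ∧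
    ∀ t ∈ Icc a b, φ t ∈ U

lemma exists_arc_of_path {X : Type} [MetricSpace X] {f : ℝ → X} (hf : Continuous f) {U : Set X}
    (hU : ∀ t, f t ∈ U) (hne : f 0 ≠ f 1) : ∃ a b φ, ArcIn U (f 0) (f 1) a b φ := by
  obtain ⟨g₀, hg₀, g0, g1, hgf, hmono⟩ := exists_monotone_path hf
  let g : ℝ → X := fun t => g₀ (max 0 (min t 1))
  have hg : Continuous g := by
    refine hg₀.comp_continuous (by fun_prop) fun t => ⟨le_max_left _ _, ?_⟩
    exact max_le zero_le_one (min_le_right _ _)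
  have hgg : ∀ t ∈ Icc (0 : ℝ) 1, g t = g₀ t := by
    intro t ht
    simp [g, ht.1, ht.2]
  let h : ℝ → ℝ := fun t => ∫ r in (0 : ℝ)..1, runSup g r t
  have hrc := runSup_continuous hg
  have hhc : Continuous h :=
    intervalIntegral.continuous_parametric_intervalIntegral_of_continuous' hrc 0 1
  have hrc' : ∀ t, Continuous fun r => runSup g r t := fun t =>
    hrc.comp (Continuous.prodMk_right t)
  have hrm : ∀ r s t, s ≤ t → runSup g r s ≤ runSup g r t := fun r s t hst =>
    runSup_le (runSup_nonneg r t) fun u h1 h2 => le_runSup hg h1 (h2.trans hst)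
  have hlt : ∀ s ∈ Icc (0 : ℝ) 1, ∀ t, s ≤ t → g s ≠ g t → h s < h t := by
    intro s hs t hst hne
    refine intervalIntegral.integral_lt_integral_of_continuousOn_of_le_of_exists_lt zero_lt_one
      (hrc' s).continuousOn (hrc' t).continuousOn (fun r _ => hrm r s t hst) ⟨s, hs, ?_⟩
    calc runSup g s s ≤ 0 := runSup_le le_rfl fun u h1 h2 => by
          rw [le_antisymm h2 h1]; simp
      _ < dist (g t) (g s) := dist_pos.2 hne.symm
      _ ≤ _ := le_runSup hg hst le_rfl
  have hle : ∀ s t, s ≤ t → h s ≤ h t := fun s t hst =>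
    intervalIntegral.integral_mono zero_le_one ((hrc' s).intervalIntegrable _ _)
      ((hrc' t).intervalIntegrable _ _) fun r => hrm r s t hst
  have heq : ∀ s ∈ Icc (0 : ℝ) 1, ∀ t ∈ Icc (0 : ℝ) 1, s ≤ t → g s = g t → h s = h t := by
    intro s hs t ht hst he
    apply intervalIntegral.integral_congr
    intro r hr
    have hflat : ∀ u, s ≤ u → u ≤ t → g u = g s := by
      intro u h1 h2
      rw [hgg s hs, hgg u ⟨hs.1.trans h1, h2.trans ht.2⟩]
      rw [hgg s hs, hgg t ht] at he
      exact hmono s hs t ht u ⟨h1, h2⟩ he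
    refine le_antisymm (hrm r s t hst) (runSup_le (runSup_nonneg _ _) fun u h1 h2 => ?_)
    rcases le_total u s with h3 | h3
    · exact le_runSup hg h1 h3
    · rw [hflat u h3 h2]
      rcases le_total r s with h4 | h4
      · exact le_runSup hg h4 le_rfl
      · rw [hflat r h4 (h1.trans h2)]
        simpa using runSup_nonneg _ _
  have hiff : ∀ s ∈ Icc (0 : ℝ) 1, ∀ t ∈ Icc (0 : ℝ) 1, h s = h t ↔ g s = g t := by
    intro s hs t ht
    rcases le_total s t with hst | hst
    · exact ⟨fun e => by_contra fun hn => (hlt s hs t hst hn).ne e, heq s hs t ht hst⟩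
    · exact ⟨fun e => by_contra fun hn => (hlt t ht s hst (Ne.symm hn)).ne e.symm,
        fun e => (heq t ht s hs hst e.symm).symm⟩
  have m0 : (0 : ℝ) ∈ Icc (0 : ℝ) 1 := by simp
  have m1 : (1 : ℝ) ∈ Icc (0 : ℝ) 1 := by simp
  have hsurj : ∀ v, ∃ t, v ∈ Icc (h 0) (h 1) → t ∈ Icc (0 : ℝ) 1 ∧ h t = v := by
    intro v
    by_cases hv : v ∈ Icc (h 0) (h 1)
    · obtain ⟨t, ht, e⟩ := intermediate_value_Icc zero_le_one hhc.continuousOn hv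
      exact ⟨t, fun _ => ⟨ht, e⟩⟩
    · exact ⟨0, fun h => absurd h hv⟩
  choose k hk using hsurj
  have hkg : ∀ t ∈ Icc (0 : ℝ) 1, g (k (h t)) = g t := by
    intro t ht
    have hm : h t ∈ Icc (h 0) (h 1) := ⟨hle _ _ ht.1, hle _ _ ht.2⟩
    exact (hiff _ (hk _ hm).1 _ ht).1 (hk _ hm).2
  have e0 : g 0 = f 0 := by rw [hgg 0 m0, g0]
  have e1 : g 1 = f 1 := by rw [hgg 1 m1, g1]
  refine ⟨h 0, h 1, fun v => g (k v), ?_, ?_, ?_, ?_, ?_, ?_⟩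
  · exact hlt 0 m0 1 zero_le_one (by rwa [e0, e1])
  · rw [continuousOn_iff_isClosed]
    intro C hC
    refine ⟨h '' (Icc 0 1 ∩ g ⁻¹' C), ?_, ?_⟩
    · exact ((isCompact_Icc.inter_right (hC.preimage hg)).image hhc).isClosed
    · ext v
      constructor
      · rintro ⟨h1, h2⟩
        exact ⟨⟨k v, ⟨(hk v h2).1, h1⟩, (hk v h2).2⟩, h2⟩
      · rintro ⟨⟨t, ⟨ht, htC⟩, rfl⟩, h2⟩
        refine ⟨?_, h2⟩
        change g (k (h t)) ∈ C
        rw [hkg t ht]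
        exact htC
  · intro v hv w hw e
    have := (hiff _ (hk v hv).1 _ (hk w hw).1).2 e
    rwa [(hk v hv).2, (hk w hw).2] at this
  · change g (k (h 0)) = _
    rw [hkg 0 m0, e0]
  · change g (k (h 1)) = _
    rw [hkg 1 m1, e1]
  · intro v hv
    change g (k v) ∈ U
    rw [hgg _ (hk v hv).1]
    obtain ⟨s, -, hs⟩ := hgf _ (hk v hv).1
    rw [hs]
    exact hU s

lemma circle_of_two_arcs {X : Type} [MetricSpace X] {φ ψ : ℝ → X} {s u p q : ℝ}
    (hsu : s < u) (hpq : p < q) (hφ : ContinuousOn φ (Icc s u)) (hψ : ContinuousOn ψ (Icc p q))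
    (iφ : InjOn φ (Icc s u)) (iψ : InjOn ψ (Icc p q)) (h1 : φ u = ψ p) (h2 : φ s = ψ q)
    (hd : ∀ t ∈ Ioo s u, ∀ v ∈ Icc p q, φ t ≠ ψ v) :
    ∃ f : Circle → X, Topology.IsEmbedding f := by
  let T := (u - s) + (q - p)
  have hT : 0 < T := by simp only [T]; linarith
  have : Fact (0 < T) := ⟨hT⟩
  have hsT : s + T = u + (q - p) := by simp only [T]; ring
  let L : ℝ → X := fun v => if v ≤ u then φ v else ψ (v - u + p)
  have hL1 : ∀ v, v ≤ u → L v = φ v := fun v hv => by simp [L, hv]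
  have hL2 : ∀ v, u ≤ v → L v = ψ (v - u + p) := by
    intro v hv
    rcases eq_or_lt_of_le hv with h | h
    · rw [hL1 v h.ge, ← h, h1]; simp
    · simp [L, not_le.2 h]
  have hLc : ContinuousOn L (Icc s (s + T)) := by
    have e : Icc s (s + T) = Icc s u ∪ Icc u (s + T) :=
      (Icc_union_Icc_eq_Icc hsu.le (by linarith)).symm
    rw [e]
    refine ContinuousOn.union_of_isClosed ?_ ?_ isClosed_Icc isClosed_Icc
    · exact hφ.congr fun v hv => hL1 v hv.2
    · refine ContinuousOn.congr (f := fun v => ψ (v - u + p)) ?_ fun v hv => hL2 v hv.1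
      refine hψ.comp (by fun_prop) fun v hv => ⟨by linarith [hv.1], by linarith [hv.2]⟩
  have hLp : L s = L (s + T) := by
    rw [hL1 s hsu.le, hL2 _ (by linarith), h2, hsT]
    congr 1; ring
  have hLi : ∀ v ∈ Ico s (s + T), ∀ w ∈ Ico s (s + T), v ≤ w → L v = L w → v = w := by
    intro v hv w hw hvw e
    rcases le_total w u with hwu | hwu
    · rw [hL1 v (hvw.trans hwu), hL1 w hwu] at e
      exact iφ ⟨hv.1, hvw.trans hwu⟩ ⟨hw.1, hwu⟩ e
    · have mw : w - u + p ∈ Icc p q := ⟨by linarith, by linarith [hw.2]⟩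
      rcases le_total u v with huv | huv
      · rw [hL2 v huv, hL2 w hwu] at e
        have := iψ ⟨by linarith, by linarith [hv.2]⟩ mw e
        linarith
      · rw [hL1 v huv, hL2 w hwu] at e
        rcases eq_or_lt_of_le hv.1 with h | h
        · rw [← h, h2] at e
          have := iψ ⟨hpq.le, le_rfl⟩ mw e
          linarith [hw.2]
        rcases eq_or_lt_of_le huv with h' | h'
        · rw [h', h1] at e
          have := iψ ⟨le_rfl, hpq.le⟩ mw e
          linarith
        exact absurd e (hd v ⟨h, h'⟩ _ mw)
  have hc := AddCircle.liftIco_continuous (p := T) (a := s) hLp hLc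
  have hinj : Function.Injective (AddCircle.liftIco T s L) := by
    intro x y hxy
    obtain ⟨v, hv, rfl⟩ : x ∈ ((↑) : ℝ → AddCircle T) '' Ico s (s + T) := by
      rw [AddCircle.coe_image_Ico_eq]; trivial
    obtain ⟨w, hw, rfl⟩ : y ∈ ((↑) : ℝ → AddCircle T) '' Ico s (s + T) := by
      rw [AddCircle.coe_image_Ico_eq]; trivial
    rw [AddCircle.liftIco_coe_apply hv, AddCircle.liftIco_coe_apply hw] at hxy
    rcases le_total v w with h | h
    · rw [hLi v hv w hw h hxy]
    · rw [hLi w hw v hv h hxy.symm]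
  have hemb := (hc.isClosedEmbedding hinj).isEmbedding
  exact ⟨_, hemb.comp (AddCircle.homeomorphCircle hT.ne').symm.isEmbedding⟩

lemma arc_subset {X : Type} [MetricSpace X] (hno : ¬ ∃ f : Circle → X, Topology.IsEmbedding f)
    {U V : Set X} {x y : X} {a b c d : ℝ} {φ ψ : ℝ → X} (h1 : ArcIn U x y a b φ)
    (h2 : ArcIn V x y c d ψ) : ∀ t ∈ Icc a b, φ t ∈ V := by
  obtain ⟨hab, hφ, iφ, φa, φb, hφU⟩ := h1
  obtain ⟨hcd, hψ, iψ, ψc, ψd, hψV⟩ := h2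
  intro t ht
  set B := ψ '' Icc c d with hB
  have hBcl : IsClosed B := (isCompact_Icc.image_of_continuousOn hψ).isClosed
  by_cases htB : φ t ∈ B
  · obtain ⟨w, hw, e⟩ := htB
    rw [← e]; exact hψV w hw
  exfalso
  have hS : IsClosed (Icc a b ∩ φ ⁻¹' B) := hφ.preimage_isClosed_of_isClosed isClosed_Icc hBcl
  have hS1 : IsCompact ((Icc a b ∩ φ ⁻¹' B) ∩ Iic t) :=
    isCompact_Icc.of_isClosed_subset (hS.inter isClosed_Iic)
      (inter_subset_left.trans inter_subset_left)
  have hS2 : IsCompact ((Icc a b ∩ φ ⁻¹' B) ∩ Ici t) :=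
    isCompact_Icc.of_isClosed_subset (hS.inter isClosed_Ici)
      (inter_subset_left.trans inter_subset_left)
  obtain ⟨s, ⟨⟨hs1, hs2⟩, hs3⟩, hs4⟩ := hS1.exists_isGreatest
    ⟨a, ⟨⟨le_rfl, hab.le⟩, c, ⟨le_rfl, hcd.le⟩, by rw [ψc, φa]⟩, ht.1⟩
  obtain ⟨u, ⟨⟨hu1, hu2⟩, hu3⟩, hu4⟩ := hS2.exists_isLeast
    ⟨b, ⟨⟨hab.le, le_rfl⟩, d, ⟨hcd.le, le_rfl⟩, by rw [ψd, φb]⟩, ht.2⟩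
  simp only [mem_Iic, mem_Ici] at hs3 hu3
  have hst : s < t := lt_of_le_of_ne hs3 (fun h => htB (h ▸ hs2))
  have htu : t < u := lt_of_le_of_ne hu3 (fun h => htB (h ▸ hu2))
  have hsub : Icc s u ⊆ Icc a b := Icc_subset_Icc hs1.1 hu1.2
  have hdis : ∀ v ∈ Ioo s u, φ v ∉ B := by
    intro v hv hvB
    have hvI := hsub (Ioo_subset_Icc_self hv)
    rcases le_total v t with h | h
    · exact absurd (hs4 ⟨⟨hvI, hvB⟩, h⟩) (not_le.2 hv.1)
    · exact absurd (hu4 ⟨⟨hvI, hvB⟩, h⟩) (not_le.2 hv.2)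
  obtain ⟨p, hp, ep⟩ := hs2
  obtain ⟨q, hq, eq⟩ := hu2
  have hpq : p ≠ q := by
    rintro rfl
    have := iφ hs1 hu1 (ep.symm.trans eq)
    linarith
  rcases lt_or_gt_of_ne hpq with h | h
  · have hs' : ∀ v ∈ Icc (-q) (-p), -v ∈ Icc c d := fun v hv =>
      ⟨by linarith [hp.1, hv.2], by linarith [hq.2, hv.1]⟩
    refine hno (circle_of_two_arcs (φ := φ) (ψ := fun v => ψ (-v)) (s := s) (u := u) (p := -q)
      (q := -p) (hst.trans htu) (by linarith) (hφ.mono hsub) ?_ (iφ.mono hsub) ?_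
      (by simp [eq]) (by simp [ep]) ?_)
    · exact hψ.comp (by fun_prop) hs'
    · intro v hv w hw e
      have := iψ (hs' v hv) (hs' w hw) e
      linarith
    · intro v hv w hw e
      exact hdis v hv ⟨-w, hs' w hw, e.symm⟩
  · have hs' : Icc q p ⊆ Icc c d := Icc_subset_Icc hq.1 hp.2
    refine hno (circle_of_two_arcs (φ := φ) (ψ := ψ) (s := s) (u := u) (p := q)
      (q := p) (hst.trans htu) h (hφ.mono hsub) (hψ.mono hs') (iφ.mono hsub) (iψ.mono hs')
      eq.symm ep.symm ?_)
    intro v hv w hw e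
    exact hdis v hv ⟨w, hs' hw, e.symm⟩

lemma exists_arc_thickening {X : Type} [MetricSpace X] [CompactSpace X] [LocallyConnectedSpace X]
    {Y : Set X} (hY : IsConnected Y) {x y : X} (hx : x ∈ Y) (hy : y ∈ Y) (hne : x ≠ y)
    {δ : ℝ} (hδ : 0 < δ) : ∃ a b φ, ArcIn (Metric.thickening δ Y) x y a b φ := by
  have := locPathConn (X := X)
  have hsub : Y ⊆ Metric.thickening δ Y := Metric.self_subset_thickening hδ Y
  set W := connectedComponentIn (Metric.thickening δ Y) x with hW
  have hWo : IsOpen W := Metric.isOpen_thickening.connectedComponentIn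
  have hYW : Y ⊆ W := hY.isPreconnected.subset_connectedComponentIn hx hsub
  have hWc : IsConnected W := ⟨⟨x, hYW hx⟩, isPreconnected_connectedComponentIn⟩
  have hWp : IsPathConnected W := (hWo.isConnected_iff_isPathConnected).1 hWc
  obtain ⟨γ, hγ⟩ := hWp.joinedIn x (hYW hx) y (hYW hy)
  have key := exists_arc_of_path (f := γ.extend) γ.continuous_extend
    (U := Metric.thickening δ Y) ?_ (by simpa using hne)
  · simpa using key
  · intro t
    have : γ.extend t ∈ range γ := by
      rw [← γ.extend_range]; exact mem_range_self t
    obtain ⟨v, hv⟩ := this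
    rw [← hv]
    exact connectedComponentIn_subset _ _ (hγ v)

lemma arc_mem {X : Type} [MetricSpace X] [CompactSpace X] [LocallyConnectedSpace X]
    (hno : ¬ ∃ f : Circle → X, Topology.IsEmbedding f)
    {Y : Set X} (hYc : IsCompact Y) (hY : IsConnected Y) {x y : X} (hx : x ∈ Y) (hy : y ∈ Y)
    (hne : x ≠ y) {U : Set X} {a b : ℝ} {φ : ℝ → X} (h : ArcIn U x y a b φ) :
    ∀ t ∈ Icc a b, φ t ∈ Y := by
  intro t ht
  rw [← hYc.isClosed.closure_eq, Metric.closure_eq_iInter_thickening]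
  simp only [mem_iInter]
  intro δ hδ
  obtain ⟨c, d, ψ, hψ⟩ := exists_arc_thickening hY hx hy hne hδ
  exact arc_subset hno h hψ t ht

lemma circle_not_unicoherent {X : Type} [MetricSpace X] {f : Circle → X}
    (hf : Topology.IsEmbedding f)
    (H : ∀ Z : Set X, IsCompact Z → IsConnected Z →
        ∀ Y₁ Y₂ : Set X, IsCompact Y₁ → IsConnected Y₁ → IsCompact Y₂ → IsConnected Y₂ →
          Y₁ ⊆ Z → Y₂ ⊆ Z → Z = Y₁ ∪ Y₂ → IsConnected (Y₁ ∩ Y₂)) : False := by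
  set A := Circle.exp '' Icc 0 Real.pi with hA
  set B := Circle.exp '' Icc (-Real.pi) 0 with hB
  have hpi := Real.pi_pos
  have cexp : Continuous Circle.exp := Circle.exp.continuous
  have hAc : IsCompact A := isCompact_Icc.image cexp
  have hBc : IsCompact B := isCompact_Icc.image cexp
  have hAn : IsConnected A := (isConnected_Icc hpi.le).image _ cexp.continuousOn
  have hBn : IsConnected B := (isConnected_Icc (by linarith)).image _ cexp.continuousOn
  have hAB : A ∪ B = univ := by
    rw [eq_univ_iff_forall]
    intro z
    have h1 := Complex.neg_pi_lt_arg (z : ℂ)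
    have h2 := Complex.arg_le_pi (z : ℂ)
    rcases le_total 0 (Complex.arg z) with h | h
    · exact Or.inl ⟨Complex.arg z, ⟨h, h2⟩, Circle.exp_arg z⟩
    · exact Or.inr ⟨Complex.arg z, ⟨h1.le, h⟩, Circle.exp_arg z⟩
  have hZ : f '' A ∪ f '' B = f '' univ := by rw [← image_union, hAB]
  have hAn' := hAn.image f hf.continuous.continuousOn
  have hBn' := hBn.image f hf.continuous.continuousOn
  have hm1A : (Circle.exp 0) ∈ A := ⟨0, ⟨le_rfl, hpi.le⟩, rfl⟩
  have hm1B : (Circle.exp 0) ∈ B := ⟨0, ⟨by linarith, le_rfl⟩, rfl⟩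
  have hm2A : (Circle.exp Real.pi) ∈ A := ⟨Real.pi, ⟨hpi.le, le_rfl⟩, rfl⟩
  have hm2B : (Circle.exp Real.pi) ∈ B := by
    refine ⟨-Real.pi, ⟨le_rfl, by linarith⟩, ?_⟩
    ext
    simp [Circle.coe_exp]
  have hconn := H (f '' A ∪ f '' B) ((hAc.image hf.continuous).union (hBc.image hf.continuous))
    (IsConnected.union ⟨f (Circle.exp 0), mem_image_of_mem _ hm1A, mem_image_of_mem _ hm1B⟩
      hAn' hBn') (f '' A) (f '' B) (hAc.image hf.continuous) hAn' (hBc.image hf.continuous) hBn'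
      subset_union_left subset_union_right rfl
  rw [← image_inter hf.injective] at hconn
  have hpre : IsPreconnected (A ∩ B) := hf.isInducing.isPreconnected_image.1 hconn.isPreconnected
  have him := hpre.image (fun z : Circle => (z : ℂ).re) (by fun_prop)
  have h0 := him.Icc_subset (mem_image_of_mem _ ⟨hm2A, hm2B⟩) (mem_image_of_mem _ ⟨hm1A, hm1B⟩)
  simp only [Circle.coe_exp] at h0
  have : (0 : ℝ) ∈ (fun z : Circle => (z : ℂ).re) '' (A ∩ B) := by
    apply h0
    simp
  obtain ⟨z, ⟨⟨s, hs, e1⟩, ⟨t, ht, e2⟩⟩, hz⟩ := this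
  have i1 : 0 ≤ (z : ℂ).im := by
    rw [← e1, Circle.coe_exp, Complex.exp_ofReal_mul_I_im]
    exact Real.sin_nonneg_of_nonneg_of_le_pi hs.1 hs.2
  have i2 : (z : ℂ).im ≤ 0 := by
    rw [← e2, Circle.coe_exp, Complex.exp_ofReal_mul_I_im]
    exact Real.sin_nonpos_of_nonpos_of_neg_pi_le ht.2 ht.1
  exact z.coe_ne_zero (Complex.ext hz (le_antisymm i2 i1))

/-- A Peano continuum is a dendrite iff it is hereditarily unicoherent. -/
theorem stmt_4 {X : Type} [MetricSpace X] [CompactSpace X] [ConnectedSpace X]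
    [LocallyConnectedSpace X] :
    (¬ ∃ f : Circle → X, Topology.IsEmbedding f) ↔
      (∀ Z : Set X, IsCompact Z → IsConnected Z →
        ∀ Y₁ Y₂ : Set X, IsCompact Y₁ → IsConnected Y₁ → IsCompact Y₂ → IsConnected Y₂ →
          Y₁ ⊆ Z → Y₂ ⊆ Z → Z = Y₁ ∪ Y₂ → IsConnected (Y₁ ∩ Y₂)) := by
  constructor
  · intro hno Z hZc hZ Y₁ Y₂ hc1 hn1 hc2 hn2 hs1 hs2 hZe
    constructor
    · obtain ⟨x, hx⟩ := hn1.nonempty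
      obtain ⟨y, hy⟩ := hn2.nonempty
      have := isPreconnected_closed_iff.1 hZ.isPreconnected Y₁ Y₂ hc1.isClosed hc2.isClosed hZe.le
        ⟨x, hs1 hx, hx⟩ ⟨y, hs2 hy, hy⟩
      obtain ⟨z, -, hz⟩ := this
      exact ⟨z, hz⟩
    · refine isPreconnected_of_forall_pair fun x hx y hy => ?_
      by_cases hne : x = y
      · subst hne
        exact ⟨{x}, by simpa using hx, rfl, rfl, isPreconnected_singleton⟩
      obtain ⟨a, b, φ, h⟩ := exists_arc_thickening hn1 hx.1 hy.1 hne one_pos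
      have m1 := arc_mem hno hc1 hn1 hx.1 hy.1 hne h
      have m2 := arc_mem hno hc2 hn2 hx.2 hy.2 hne h
      obtain ⟨hab, hφ, -, φa, φb, -⟩ := h
      refine ⟨φ '' Icc a b, ?_, ⟨a, ⟨le_rfl, hab.le⟩, φa⟩, ⟨b, ⟨hab.le, le_rfl⟩, φb⟩,
        isPreconnected_Icc.image _ hφ⟩
      rintro _ ⟨t, ht, rfl⟩
      exact ⟨m1 t ht, m2 t ht⟩
  · rintro H ⟨f, hf⟩
    exact circle_not_unicoherent hf H
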